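/- Every finite extensive-form game with perfect recall possesses a subgame perfect semi-sequential equilibrium: there exist a behavioral strategy profile β* and a belief system μ* forming a subgame perfect semi-sequential equilibrium. -/

import Mathlib

open scoped Classical

noncomputable section

/-- A finite extensive-form game.  Actions are labelled by natural numbers drawn from the
finite pool `actFinset`; a history is the list of actions taken so far; players are `Fin n`
and `P h = none` means that the chance player moves after `h`.  The information sets of
player `i` are `Info i j` for `j < m i`, and `infoIdx h` is the index of the information
set containing a nonterminal history `h` at which some player moves.  Payoffs `u i h` are
relevant on terminal histories. -/
structure EFG where
  n : ℕ
  actFinset : Finset ℕ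
  H : Finset (List ℕ)
  P : List ℕ → Option (Fin n)
  fc : List ℕ → ℕ → ℝ
  m : Fin n → ℕ
  Info : Fin n → ℕ → Finset (List ℕ)
  infoIdx : List ℕ → ℕ
  u : Fin n → List ℕ → ℝ
  empty_mem : ([] : List ℕ) ∈ H
  prefixClosed : ∀ h ∈ H, ∀ h' : List ℕ, h' <+: h → h' ∈ H
  act_mem : ∀ (h : List ℕ) (a : ℕ), h ++ [a] ∈ H → a ∈ actFinset
  fc_nonneg : ∀ h a, 0 ≤ fc h a
  fc_sum : ∀ h ∈ H, P h = none → (∃ a, h ++ [a] ∈ H) →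
    ∑ a ∈ actFinset.filter (fun a => h ++ [a] ∈ H), fc h a = 1
  info_spec : ∀ (i : Fin n) (j : ℕ) (h : List ℕ), j < m i →
    (h ∈ Info i j ↔ h ∈ H ∧ P h = some i ∧ (∃ a, h ++ [a] ∈ H) ∧ infoIdx h = j)
  infoIdx_lt : ∀ (i : Fin n), ∀ h ∈ H, P h = some i → (∃ a, h ++ [a] ∈ H) → infoIdx h < m i
  info_nonempty : ∀ (i : Fin n) (j : ℕ), j < m i → (Info i j).Nonempty
  info_actions : ∀ (i : Fin n) (j : ℕ), j < m i → ∀ h ∈ Info i j, ∀ h' ∈ Info i j,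
    ∀ a : ℕ, (h ++ [a] ∈ H ↔ h' ++ [a] ∈ H)
  act_unique : ∀ (h h' : List ℕ) (a : ℕ), h ∈ H → h' ∈ H → h ++ [a] ∈ H → h' ++ [a] ∈ H →
    P h = P h' ∧ infoIdx h = infoIdx h'

namespace EFG

/-- Behavioral strategy profiles (player, information-set index, action ↦ probability). -/
abbrev Profile (G : EFG) : Type := Fin G.n → ℕ → ℕ → ℝ

/-- Belief systems (player, information-set index, history ↦ probability). -/
abbrev Belief (G : EFG) : Type := Fin G.n → ℕ → List ℕ → ℝ

variable (G : EFG)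

/-- The set `Z` of terminal histories. -/
def Zset : Finset (List ℕ) := G.H.filter fun h => ∀ a : ℕ, h ++ [a] ∉ G.H

/-- The set `A(h)` of actions available after a history. -/
def A (h : List ℕ) : Finset ℕ := G.actFinset.filter fun a => h ++ [a] ∈ G.H

/-- The common action set `A(I_i^j)` of an information set. -/
def infoA (i : Fin G.n) (j : ℕ) : Finset ℕ := (G.Info i j).sup fun h => G.A h

/-- A behavioral strategy of player `i`: a probability distribution on `A(I_i^j)` for
each information set `I_i^j`. -/
def IsBehStrategy (i : Fin G.n) (b : ℕ → ℕ → ℝ) : Prop :=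
  ∀ j < G.m i, (∀ a ∈ G.infoA i j, 0 ≤ b j a) ∧ ∑ a ∈ G.infoA i j, b j a = 1

/-- A behavioral strategy profile. -/
def IsBehProfile (β : G.Profile) : Prop := ∀ i : Fin G.n, G.IsBehStrategy i (β i)

/-- The probability of action `a` at history `h`: the chance distribution if the chance
player moves, and the mover's behavioral strategy otherwise. -/
def moveProb (β : G.Profile) (h : List ℕ) (a : ℕ) : ℝ :=
  (G.P h).elim (G.fc h a) fun i => β i (G.infoIdx h) a

/-- Player `i`'s record `X_i` of the information sets he encounters along a history and the
actions he takes at them, accumulated starting from the prefix `pre`. -/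
def recordFrom (i : Fin G.n) : List ℕ → List ℕ → List (ℕ × ℕ)
  | _, [] => []
  | pre, b :: rest =>
    (if G.P pre = some i then [(G.infoIdx pre, b)] else []) ++ recordFrom i (pre ++ [b]) rest

/-- Perfect recall. -/
def PerfectRecall : Prop :=
  ∀ (i : Fin G.n) (j : ℕ), j < G.m i →
    ∀ h ∈ G.Info i j, ∀ h' ∈ G.Info i j, G.recordFrom i [] h = G.recordFrom i [] h'

/-- Product of the move probabilities along `rest`, continuing from the prefix `pre`. -/
def prodAlong (β : G.Profile) : List ℕ → List ℕ → ℝ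
  | _, [] => 1
  | pre, b :: rest => G.moveProb β pre b * prodAlong β (pre ++ [b]) rest

/-- `ω(h|β)`: the probability that the moves along `h` are played under `β`. -/
def omega (β : G.Profile) (h : List ℕ) : ℝ := G.prodAlong β [] h

/-- `ω(I_i^j|β)`. -/
def omegaInfo (i : Fin G.n) (j : ℕ) (β : G.Profile) : ℝ := ∑ h ∈ G.Info i j, G.omega β h

/-- Product of the move probabilities along `rest` from `pre`, disregarding player `i`'s
own moves. -/
def prodAlongNot (i : Fin G.n) (β : G.Profile) : List ℕ → List ℕ → ℝ
  | _, [] => 1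
  | pre, b :: rest =>
    (if G.P pre = some i then 1 else G.moveProb β pre b) * prodAlongNot i β (pre ++ [b]) rest

/-- `S^i(h|β)`: probability of the moves along `h`, disregarding player `i`'s own moves. -/
def Sh (i : Fin G.n) (β : G.Profile) (h : List ℕ) : ℝ := G.prodAlongNot i β [] h

/-- `S^i(I_i^j|β)`. -/
def SInfo (i : Fin G.n) (j : ℕ) (β : G.Profile) : ℝ := ∑ h ∈ G.Info i j, G.Sh i β h

/-- Product of the move probabilities along `rest` from `pre`, with the factor at prefixes
lying in `I_i^j` omitted. -/
def prodAlongSkip (i : Fin G.n) (j : ℕ) (β : G.Profile) : List ℕ → List ℕ → ℝ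
  | _, [] => 1
  | pre, b :: rest =>
    (if pre ∈ G.Info i j then 1 else G.moveProb β pre b) * prodAlongSkip i j β (pre ++ [b]) rest

/-- `q ∈ M(a, I_i^j)`: `I_i^q` is a first information set of player `i` after action `a`
(every history in `I_i^q` contains `a`, with no later action of `a` lying in any action set
of player `i`). -/
def FirstAfter (i : Fin G.n) (a : ℕ) (q : ℕ) : Prop :=
  q < G.m i ∧ ∀ h ∈ G.Info i q, ∃ l₁ l₂ : List ℕ,
    h = l₁ ++ a :: l₂ ∧ ∀ b ∈ l₂, ∀ p < G.m i, b ∉ G.infoA i p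

/-- `q ∈ M(I_i^j) = ∪_{a ∈ A(I_i^j)} M(a, I_i^j)`. -/
def MInfo (i : Fin G.n) (j : ℕ) (q : ℕ) : Prop := ∃ a ∈ G.infoA i j, G.FirstAfter i a q

/-- `q ∈ Λ(a, I_i^j)`: every history in `I_i^q` contains the action `a`. -/
def LambdaSet (i : Fin G.n) (a : ℕ) (q : ℕ) : Prop :=
  q < G.m i ∧ ∀ h ∈ G.Info i q, ∃ l₁ l₂ : List ℕ, h = l₁ ++ a :: l₂

/-- `ϱ^i_{I_i^j}(β, β̃)`: replace player `i`'s component of `β` by that of `β̃` at every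
information set `I_i^q` such that some history in `I_i^q` contains an action of `A(I_i^j)`. -/
def rho (i : Fin G.n) (j : ℕ) (β βt : G.Profile) : G.Profile := fun p q =>
  if p = i ∧ ∃ h ∈ G.Info i q, ∃ b ∈ h, b ∈ G.infoA i j then βt i q else β p q

/-- A belief system: a probability distribution on each information set. -/
def IsBelief (μ : G.Belief) : Prop :=
  ∀ (i : Fin G.n) (j : ℕ), j < G.m i →
    (∀ h ∈ G.Info i j, 0 ≤ μ i j h) ∧ ∑ h ∈ G.Info i j, μ i j h = 1

/-- A self-independent belief system for `β`:
`S^i(I_i^j|β) · μ^i_{I_i^j}(h) = S^i(h|β)`. -/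
def SelfIndep (β : G.Profile) (μ : G.Belief) : Prop :=
  ∀ (i : Fin G.n) (j : ℕ), j < G.m i → ∀ h ∈ G.Info i j,
    G.SInfo i j β * μ i j h = G.Sh i β h

/-- Auxiliary for `ν`: scan `rest` from `pre` for the subhistory lying in `I_i^j`, then
weight by the belief and multiply the move probabilities of the remaining moves (the move
taken at the subhistory itself being skipped). -/
def nuAux (i : Fin G.n) (j : ℕ) (β : G.Profile) (w : List ℕ → ℝ) : List ℕ → List ℕ → ℝ
  | _, [] => 0
  | pre, b :: rest =>
    if pre ∈ G.Info i j then w pre * G.prodAlong β (pre ++ [b]) rest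
    else nuAux i j β w (pre ++ [b]) rest

/-- `ν^i_{I_i^j}(h | a, β^{-I_i^j}, μ)` (it does not involve the component of `β` at
`I_i^j`). -/
def nu (i : Fin G.n) (j : ℕ) (β : G.Profile) (μ : G.Belief) (h : List ℕ) : ℝ :=
  G.nuAux i j β (μ i j) [] h

/-- `u^i((a, β^{-I_i^j}) ∧ I_i^j)`. -/
def uWedgeAct (i : Fin G.n) (j : ℕ) (a : ℕ) (β : G.Profile) : ℝ :=
  ∑ h ∈ G.Zset.filter (fun h => a ∈ h), G.u i h * G.prodAlongSkip i j β [] h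

/-- `u^i(β ∧ I_i^j)`. -/
def uWedge (i : Fin G.n) (j : ℕ) (β : G.Profile) : ℝ :=
  ∑ h ∈ G.Zset.filter (fun h => ∃ b ∈ h, b ∈ G.infoA i j), G.u i h * G.omega β h

/-- The conditional expected payoff `u^i(a, β^{-I_i^j}, μ | I_i^j)`. -/
def uCond (i : Fin G.n) (j : ℕ) (a : ℕ) (β : G.Profile) (μ : G.Belief) : ℝ :=
  ∑ h ∈ G.Zset.filter (fun h => a ∈ h), G.u i h * G.nu i j β μ h

/-- The expected payoff `u^i(β)`. -/
def uExp (i : Fin G.n) (β : G.Profile) : ℝ := ∑ h ∈ G.Zset, G.u i h * G.omega β h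

/-- The profile obtained from `β` by replacing all of player `i`'s components by `b`. -/
def replace (β : G.Profile) (i : Fin G.n) (b : ℕ → ℕ → ℝ) : G.Profile :=
  fun p => if p = i then b else β p

/-- `β` is a Nash equilibrium in behavioral strategies. -/
def IsNash (β : G.Profile) : Prop :=
  G.IsBehProfile β ∧ ∀ (i : Fin G.n) (b : ℕ → ℕ → ℝ), G.IsBehStrategy i b →
    G.uExp i (G.replace β i b) ≤ G.uExp i β

/-- `(β, β̃, μ)` satisfies the Nash characterization (Definition 2 of the paper). -/
def NashChar (β βt : G.Profile) (μ : G.Belief) : Prop :=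
  (∀ (i : Fin G.n) (j : ℕ), j < G.m i → ∀ a' ∈ G.infoA i j, ∀ a'' ∈ G.infoA i j,
    G.uWedgeAct i j a' (G.rho i j β βt) < G.uWedgeAct i j a'' (G.rho i j β βt) →
    β i j a' = 0) ∧
  (∀ (i : Fin G.n) (j : ℕ), j < G.m i → ∀ a' ∈ G.infoA i j, ∀ a'' ∈ G.infoA i j,
    G.uCond i j a' (G.rho i j β βt) μ < G.uCond i j a'' (G.rho i j β βt) μ →
    βt i j a' = 0) ∧
  G.IsBelief μ ∧ G.SelfIndep β μ

/-- `r` is the root of a subgame: every information set lies entirely inside or entirely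
outside the set of histories extending `r`. -/
def IsSubgameRoot (r : List ℕ) : Prop :=
  r ∈ G.H ∧ ∀ (i : Fin G.n) (j : ℕ), j < G.m i →
    (∀ h ∈ G.Info i j, r <+: h) ∨ ∀ h ∈ G.Info i j, ¬ r <+: h

/-- The depth `g` of the smallest subgame containing `A(I_i^j)` (the length of the longest
subgame root preceding every history of `I_i^j`). -/
def sgDepthInfo (i : Fin G.n) (j : ℕ) : ℕ :=
  (G.H.filter fun r => G.IsSubgameRoot r ∧ ∀ h ∈ G.Info i j, r <+: h).sup List.length

/-- The depth `q(h)` of the smallest subgame containing the last action of `h`. -/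
def sgDepthHist (h : List ℕ) : ℕ :=
  (G.H.filter fun r => G.IsSubgameRoot r ∧ r <+: h.dropLast).sup List.length

/-- `C^i_{I_i^j}(h|β)`: product of move probabilities along `h` within the smallest subgame
containing `A(I_i^j)`. -/
def Ch (i : Fin G.n) (j : ℕ) (β : G.Profile) (h : List ℕ) : ℝ :=
  G.prodAlong β (h.take (G.sgDepthInfo i j)) (h.drop (G.sgDepthInfo i j))

/-- `C^i_{I_i^j}(I_i^j|β)`. -/
def CInfo (i : Fin G.n) (j : ℕ) (β : G.Profile) : ℝ := ∑ h ∈ G.Info i j, G.Ch i j β h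

/-- `u^i((a, β^{-I_i^j}) ⋄ I_i^j)`. -/
def uDiamondAct (i : Fin G.n) (j : ℕ) (a : ℕ) (β : G.Profile) : ℝ :=
  ∑ h ∈ G.Zset.filter (fun h => a ∈ h), G.u i h *
    G.prodAlongSkip i j β (h.take (G.sgDepthInfo i j)) (h.drop (G.sgDepthInfo i j))

/-- `Y^i(h|β)`: like `S^i(h|β)` but within the smallest subgame containing the last action
of `h`. -/
def Yh (i : Fin G.n) (β : G.Profile) (h : List ℕ) : ℝ :=
  G.prodAlongNot i β (h.take (G.sgDepthHist h)) (h.drop (G.sgDepthHist h))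

/-- `Y^i(I_i^j|β)`. -/
def YInfo (i : Fin G.n) (j : ℕ) (β : G.Profile) : ℝ := ∑ h ∈ G.Info i j, G.Yh i β h

/-- The belief condition `Y^i(I_i^j|β) · μ^i_{I_i^j}(h) = Y^i(h|β)`. -/
def YConsistent (β : G.Profile) (μ : G.Belief) : Prop :=
  ∀ (i : Fin G.n) (j : ℕ), j < G.m i → ∀ h ∈ G.Info i j,
    G.YInfo i j β * μ i j h = G.Yh i β h

/-- The expected payoff of player `i` in the subgame rooted at `r` (payoffs of terminal
histories extending `r`, weighted by the move probabilities within the subgame). -/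
def uExpFrom (i : Fin G.n) (β : G.Profile) (r : List ℕ) : ℝ :=
  ∑ h ∈ G.Zset.filter (fun h => r <+: h), G.u i h * G.prodAlong β r (h.drop r.length)

/-- `β` is a subgame perfect equilibrium in behavioral strategies: its restriction to every
subgame is a Nash equilibrium in behavioral strategies of that subgame. -/
def IsSubgamePerfect (β : G.Profile) : Prop :=
  G.IsBehProfile β ∧ ∀ r : List ℕ, G.IsSubgameRoot r →
    ∀ (i : Fin G.n) (b : ℕ → ℕ → ℝ), G.IsBehStrategy i b →
      G.uExpFrom i (G.replace β i b) r ≤ G.uExpFrom i β r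

/-- `(β, β̃, μ)` satisfies the subgame perfect characterization (Definition 6 of the
paper). -/
def SubgameChar (β βt : G.Profile) (μ : G.Belief) : Prop :=
  (∀ (i : Fin G.n) (j : ℕ), j < G.m i → ∀ a' ∈ G.infoA i j, ∀ a'' ∈ G.infoA i j,
    G.uDiamondAct i j a' (G.rho i j β βt) < G.uDiamondAct i j a'' (G.rho i j β βt) →
    β i j a' = 0) ∧
  (∀ (i : Fin G.n) (j : ℕ), j < G.m i → ∀ a' ∈ G.infoA i j, ∀ a'' ∈ G.infoA i j,
    G.uCond i j a' (G.rho i j β βt) μ < G.uCond i j a'' (G.rho i j β βt) μ →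
    βt i j a' = 0) ∧
  G.IsBelief μ ∧ G.YConsistent β μ

/-- `(β, μ)` is a semi-sequential equilibrium. -/
def SemiSeqEq (β : G.Profile) (μ : G.Belief) : Prop :=
  G.IsBehProfile β ∧ G.IsBelief μ ∧ G.SelfIndep β μ ∧
  ∀ (i : Fin G.n) (j : ℕ), j < G.m i → ∀ a' ∈ G.infoA i j, ∀ a'' ∈ G.infoA i j,
    G.uCond i j a' β μ < G.uCond i j a'' β μ → β i j a' = 0

/-- `(β, μ)` is a subgame perfect semi-sequential equilibrium. -/
def SubgameSemiSeqEq (β : G.Profile) (μ : G.Belief) : Prop :=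
  G.IsBehProfile β ∧ G.IsBelief μ ∧ G.YConsistent β μ ∧
  ∀ (i : Fin G.n) (j : ℕ), j < G.m i → ∀ a' ∈ G.infoA i j, ∀ a'' ∈ G.infoA i j,
    G.uCond i j a' β μ < G.uCond i j a'' β μ → β i j a' = 0

/-- `d(I_i^j)`: the number of information sets of player `i` containing a prefix of some
history of `I_i^j` (counting `I_i^j` itself). -/
def dInfo (i : Fin G.n) (j : ℕ) : ℕ :=
  ((Finset.range (G.m i)).filter
    (fun q => ∃ h ∈ G.Info i j, ∃ p : List ℕ, p <+: h ∧ p ∈ G.Info i q)).card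

end EFG

section Brouwer

open scoped NNReal ENNReal
open MeasureTheory

theorem brw_det_interp {ι : Type} [Fintype ι] [DecidableEq ι]
    (A : EuclideanSpace ℝ ι →L[ℝ] EuclideanSpace ℝ ι) (s : Finset ℝ)
    (hs : Fintype.card ι < s.card) (T : ℝ) :
    (ContinuousLinearMap.id ℝ _ + T • A).det =
      ∑ k ∈ s, (Lagrange.basis s id k).eval T * (ContinuousLinearMap.id ℝ _ + k • A).det := by
  set b := (EuclideanSpace.basisFun ι ℝ).toBasis
  set M := LinearMap.toMatrix b b (A : EuclideanSpace ℝ ι →ₗ[ℝ] EuclideanSpace ℝ ι) with hM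
  set p := Matrix.det ((Polynomial.X : Polynomial ℝ) • M.map Polynomial.C +
    (1 : Matrix ι ι ℝ).map Polynomial.C) with hp
  have key : ∀ t : ℝ, (ContinuousLinearMap.id ℝ _ + t • A).det = p.eval t := by
    intro t
    rw [hp, ← Polynomial.coe_evalRingHom, RingHom.map_det]
    rw [ContinuousLinearMap.det, ← LinearMap.det_toMatrix b]
    congr 1
    have : (((ContinuousLinearMap.id ℝ _ + t • A : EuclideanSpace ℝ ι →L[ℝ] EuclideanSpace ℝ ι)) : EuclideanSpace ℝ ι →ₗ[ℝ] EuclideanSpace ℝ ι)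
      = LinearMap.id + t • (A : EuclideanSpace ℝ ι →ₗ[ℝ] EuclideanSpace ℝ ι) := rfl
    rw [this, map_add, map_smul, LinearMap.toMatrix_id]
    ext i j
    simp [Matrix.one_apply, hM]
    split_ifs <;> simp <;> ring
  have hdeg : p.degree < s.card := by
    refine lt_of_le_of_lt Polynomial.degree_le_natDegree ?_
    exact_mod_cast lt_of_le_of_lt (Polynomial.natDegree_det_X_add_C_le M 1) hs
  have := Lagrange.eq_interpolate (s := s) (v := id) (f := p) (Set.injOn_id _) hdeg
  rw [key, this, Lagrange.interpolate_apply, Polynomial.eval_finsetSum]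
  refine Finset.sum_congr rfl fun k hk => ?_
  rw [key]
  simp [mul_comm]

theorem brw_det_pos {ι : Type} [Fintype ι]
    (A : EuclideanSpace ℝ ι →L[ℝ] EuclideanSpace ℝ ι) (hA : ‖A‖ < 1) :
    0 < (ContinuousLinearMap.id ℝ _ + A).det := by
  have hne : ∀ t ∈ Set.Icc (0:ℝ) 1, (ContinuousLinearMap.id ℝ _ + t • A).det ≠ 0 := by
    intro t ht h0
    obtain ⟨v, hv, hv0⟩ := LinearMap.bot_lt_ker_of_det_eq_zero (f := ((ContinuousLinearMap.id ℝ _ + t • A : EuclideanSpace ℝ ι →L[ℝ] EuclideanSpace ℝ ι) : EuclideanSpace ℝ ι →ₗ[ℝ] EuclideanSpace ℝ ι)) h0 |> SetLike.exists_of_lt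
    have hv1 : v + t • A v = 0 := by simpa using hv
    have hvn : 0 < ‖v‖ := by simpa using hv0
    have h1 : ‖v‖ = ‖t • A v‖ := by
      rw [eq_neg_of_add_eq_zero_left hv1, norm_neg]
      rw [← eq_neg_of_add_eq_zero_left hv1]
    have h2 : ‖A v‖ ≤ ‖A‖ * ‖v‖ := A.le_opNorm v
    rw [norm_smul, Real.norm_of_nonneg ht.1] at h1
    have h3 : t * ‖A v‖ ≤ 1 * ‖A v‖ := mul_le_mul_of_nonneg_right ht.2 (norm_nonneg _)
    nlinarith
  have hc : Continuous fun t : ℝ => (ContinuousLinearMap.id ℝ (EuclideanSpace ℝ ι) + t • A).det := by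
    exact ContinuousLinearMap.continuous_det.comp (by fun_prop)
  by_contra hneg
  push Not at hneg
  have hI := intermediate_value_Icc' (f := fun t : ℝ => (ContinuousLinearMap.id ℝ (EuclideanSpace ℝ ι) + t • A).det) (zero_le_one) hc.continuousOn
  have : (0:ℝ) ∈ Set.Icc ((ContinuousLinearMap.id ℝ (EuclideanSpace ℝ ι) + (1:ℝ) • A).det) ((ContinuousLinearMap.id ℝ (EuclideanSpace ℝ ι) + (0:ℝ) • A).det) := by
    constructor
    · simpa using hneg
    · simp [ContinuousLinearMap.det]
  obtain ⟨t, ht, h⟩ := hI this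
  exact hne t ht h

theorem brw_small {ι : Type} [Fintype ι]
    (K : EuclideanSpace ℝ ι → EuclideanSpace ℝ ι) (L : ℝ≥0) (R : ℝ)
    (hL : LipschitzWith L (fun x => K x - x))
    (hout : ∀ x, R ≤ ‖x‖ → K x = x)
    (hd : ∀ x, ‖x‖ < R → DifferentiableAt ℝ K x) (t : ℝ) (ht0 : 0 < t) (ht : t * L < 1) :
    IntegrableOn (fun x => (ContinuousLinearMap.id ℝ _ + t • fderiv ℝ (fun x => K x - x) x).det)
      (Metric.ball 0 R) ∧
    ∫ x in Metric.ball 0 R,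
      (ContinuousLinearMap.id ℝ _ + t • fderiv ℝ (fun x => K x - x) x).det
      = volume.real (Metric.ball (0 : EuclideanSpace ℝ ι) R) := by
  set g := fun x => K x - x with hg
  set f : EuclideanSpace ℝ ι → EuclideanSpace ℝ ι := fun x => x + t • g x with hf
  have happ : ApproximatesLinearOn f
      ((ContinuousLinearEquiv.refl ℝ (EuclideanSpace ℝ ι) : EuclideanSpace ℝ ι ≃L[ℝ] EuclideanSpace ℝ ι) : EuclideanSpace ℝ ι →L[ℝ] EuclideanSpace ℝ ι)
      Set.univ (t.toNNReal * L) := by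
    intro x _ y _
    have h1 : f x - f y - (x - y) = t • (g x - g y) := by
      simp only [hf, smul_sub]; abel
    have h2 := hL.norm_sub_le x y
    simp only [ContinuousLinearEquiv.coe_refl, ContinuousLinearMap.coe_id', id]
    rw [h1, norm_smul, Real.norm_of_nonneg ht0.le]
    simp only [NNReal.coe_mul, Real.coe_toNNReal _ ht0.le, mul_assoc]
    exact mul_le_mul_of_nonneg_left h2 ht0.le
  have hc : Subsingleton (EuclideanSpace ℝ ι) ∨ t.toNNReal * L <
      ‖(((ContinuousLinearEquiv.refl ℝ (EuclideanSpace ℝ ι) : EuclideanSpace ℝ ι ≃L[ℝ] EuclideanSpace ℝ ι)).symm : EuclideanSpace ℝ ι →L[ℝ] EuclideanSpace ℝ ι)‖₊⁻¹ := by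
    rcases subsingleton_or_nontrivial (EuclideanSpace ℝ ι) with h | h
    · exact Or.inl h
    · right
      have : ‖(((ContinuousLinearEquiv.refl ℝ (EuclideanSpace ℝ ι) : EuclideanSpace ℝ ι ≃L[ℝ] EuclideanSpace ℝ ι)).symm : EuclideanSpace ℝ ι →L[ℝ] EuclideanSpace ℝ ι)‖₊ = 1 := by
        apply NNReal.eq
        simp
      rw [this, inv_one, ← NNReal.coe_lt_coe]
      simpa [Real.coe_toNNReal _ ht0.le] using ht
  have hinj : Function.Injective f := by
    have := happ.injOn hc
    exact Set.injOn_univ.1 this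
  have hsurj : Function.Surjective f := happ.surjective hc
  have hfout : ∀ x, R ≤ ‖x‖ → f x = x := by
    intro x hx; simp [hf, hg, hout x hx]
  have himg : f '' Metric.ball 0 R = Metric.ball 0 R := by
    ext y
    constructor
    · rintro ⟨x, hx, rfl⟩
      by_contra hy
      have hy' : R ≤ ‖f x‖ := by simpa using hy
      have := hinj (hfout _ hy')
      rw [this] at hy'
      simp at hx; linarith
    · intro hy
      obtain ⟨x, rfl⟩ := hsurj y
      refine ⟨x, ?_, rfl⟩
      by_contra hx
      have hx' : R ≤ ‖x‖ := by simpa using hx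
      rw [hfout x hx'] at hy
      exact hx hy
  have hgd : ∀ x ∈ Metric.ball (0 : EuclideanSpace ℝ ι) R, DifferentiableAt ℝ g x := by
    intro x hx
    exact (hd x (by simpa using hx)).sub differentiableAt_id
  have hder : ∀ x ∈ Metric.ball (0 : EuclideanSpace ℝ ι) R, HasFDerivWithinAt f
      (ContinuousLinearMap.id ℝ _ + t • fderiv ℝ g x) (Metric.ball 0 R) x := by
    intro x hx
    exact ((hasFDerivAt_id x).add ((hgd x hx).hasFDerivAt.const_smul t)).hasFDerivWithinAt
  have hpos : ∀ x, 0 < (ContinuousLinearMap.id ℝ _ + t • fderiv ℝ g x).det := by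
    intro x
    apply brw_det_pos
    rw [norm_smul, Real.norm_of_nonneg ht0.le]
    exact lt_of_le_of_lt (mul_le_mul_of_nonneg_left (norm_fderiv_le_of_lipschitz ℝ hL) ht0.le) ht
  have hm : MeasurableSet (Metric.ball (0 : EuclideanSpace ℝ ι) R) := measurableSet_ball
  have e1 := integrableOn_image_iff_integrableOn_abs_det_fderiv_smul volume hm hder hinj.injOn (fun _ => (1:ℝ))
  have e2 := integral_image_eq_integral_abs_det_fderiv_smul volume hm hder hinj.injOn (fun _ => (1:ℝ))
  simp only [abs_of_pos (hpos _), smul_eq_mul, mul_one, himg] at e1 e2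
  refine ⟨e1.1 ?_, ?_⟩
  · simp [integrableOn_const_iff, measure_ball_lt_top]
  · rw [← e2]; simp

theorem brw_no_retract {ι : Type} [Fintype ι]
    (K : EuclideanSpace ℝ ι → EuclideanSpace ℝ ι) (L : ℝ≥0) (R : ℝ) (hR : 0 < R)
    (hL : LipschitzWith L (fun x => K x - x))
    (hout : ∀ x, R ≤ ‖x‖ → K x = x)
    (hin : ∀ x, ‖x‖ < R → ‖K x‖ = R)
    (hd : ∀ x, ‖x‖ < R → DifferentiableAt ℝ K x) : False := by
  classical
  set s : Finset ℝ := (Finset.range (Fintype.card ι + 1)).image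
    (fun k : ℕ => 1 / ((L : ℝ) + 1 + k)) with hs
  have hLn : (0:ℝ) ≤ L := L.2
  have hcard : Fintype.card ι < s.card := by
    rw [hs, Finset.card_image_of_injective]
    · simp
    · intro a b hab
      have ha : (0:ℝ) < L + 1 + a := by positivity
      have hb : (0:ℝ) < L + 1 + b := by positivity
      simp only [one_div, inv_inj] at hab
      exact_mod_cast (add_left_cancel hab)
  have hsm : ∀ k ∈ s, 0 < k ∧ k * L < 1 := by
    intro k hk
    obtain ⟨m, -, rfl⟩ := Finset.mem_image.1 hk
    have ha : (0:ℝ) < L + 1 + m := by positivity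
    refine ⟨by positivity, ?_⟩
    rw [one_div, inv_mul_lt_iff₀ ha]
    have : (0:ℝ) ≤ m := by positivity
    linarith
  have hI : ∀ k ∈ s, _ := fun k hk => brw_small K L R hL hout hd k (hsm k hk).1 (hsm k hk).2
  have hzero : ∀ x ∈ Metric.ball (0 : EuclideanSpace ℝ ι) R,
      (ContinuousLinearMap.id ℝ _ + (1:ℝ) • fderiv ℝ (fun x => K x - x) x).det = 0 := by
    intro x hx
    have hxR : ‖x‖ < R := by simpa using hx
    have hKd := hd x hxR
    have h1 : ContinuousLinearMap.id ℝ _ + (1:ℝ) • fderiv ℝ (fun x => K x - x) x = fderiv ℝ K x := by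
      have : fderiv ℝ (fun x => K x - x) x = fderiv ℝ K x - ContinuousLinearMap.id ℝ _ :=
        (hKd.hasFDerivAt.sub (hasFDerivAt_id x)).fderiv
      rw [this]; simp
    rw [h1]
    by_contra hne
    have hsur : Function.Surjective (fderiv ℝ K x) := by
      have := (LinearMap.equivOfDetNeZero (fderiv ℝ K x : EuclideanSpace ℝ ι →ₗ[ℝ] EuclideanSpace ℝ ι) hne).surjective
      exact this
    obtain ⟨v, hv⟩ := hsur (K x)
    have hq : HasFDerivAt (fun y => inner ℝ (K y) (K y)) _ x := hKd.hasFDerivAt.inner ℝ hKd.hasFDerivAt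
    have hq2 : HasFDerivAt (fun y => inner ℝ (K y) (K y)) (0 : EuclideanSpace ℝ ι →L[ℝ] ℝ) x := by
      refine (hasFDerivAt_const (R^2) x).congr_of_eventuallyEq ?_
      filter_upwards [Metric.isOpen_ball.mem_nhds hx] with y hy
      rw [real_inner_self_eq_norm_sq, hin y (by simpa using hy)]
    have h3 := congrArg (fun A => A v) (hq.unique hq2)
    simp [hv] at h3
    have := hin x hxR
    rw [h3] at this
    simp at this
    linarith
  have hIzero : ∫ x in Metric.ball (0 : EuclideanSpace ℝ ι) R,
      (ContinuousLinearMap.id ℝ _ + (1:ℝ) • fderiv ℝ (fun x => K x - x) x).det = 0 := by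
    rw [setIntegral_congr_fun measurableSet_ball hzero]; simp
  simp_rw [fun x => brw_det_interp (fderiv ℝ (fun x => K x - x) x) s hcard 1] at hIzero
  rw [integral_finsetSum _ (fun k hk => ((hI k hk).1.const_mul _))] at hIzero
  simp_rw [integral_const_mul] at hIzero
  rw [Finset.sum_congr rfl (fun k hk => by rw [(hI k hk).2]), ← Finset.sum_mul,
    ← Polynomial.eval_finsetSum, Lagrange.sum_basis (Set.injOn_id _)
      (Finset.card_pos.1 (by omega))] at hIzero
  simp at hIzero
  have : 0 < volume.real (Metric.ball (0 : EuclideanSpace ℝ ι) R) :=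
    ENNReal.toReal_pos (Metric.measure_ball_pos _ _ hR).ne' measure_ball_lt_top.ne
  linarith

theorem brw_rho_lip {E : Type} [NormedAddCommGroup E] [NormedSpace ℝ E] (R δ : ℝ) (hR : 0 < R)
    (hδ : 0 < δ) (y z : E) (hy : δ ≤ ‖y‖) (hz : δ ≤ ‖z‖) :
    ‖(max R ‖y‖ / ‖y‖) • y - (max R ‖z‖ / ‖z‖) • z‖ ≤ (2 * (R / δ + 1) + 1) * ‖y - z‖ := by
  have hy0 : 0 < ‖y‖ := by linarith
  have hz0 : 0 < ‖z‖ := by linarith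
  set a := max R ‖y‖ with ha
  set b := max R ‖z‖ with hb
  have ha1 : a / ‖y‖ ≤ R / δ + 1 := by
    rw [div_le_iff₀ hy0, ha]
    have h1 : R ≤ R / δ * ‖y‖ := by
      rw [div_mul_eq_mul_div, le_div_iff₀ hδ]; nlinarith
    have h2 : 0 ≤ R / δ * ‖y‖ := by positivity
    apply max_le <;> nlinarith
  have ha0 : 0 ≤ a / ‖y‖ := by positivity
  have hab : |a - b| ≤ ‖y - z‖ := by
    refine le_trans (abs_max_sub_max_le_max _ _ _ _) ?_
    simpa using abs_norm_sub_norm_le y z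
  have hyz : |‖z‖ - ‖y‖| ≤ ‖y - z‖ := by
    rw [abs_sub_comm]; exact abs_norm_sub_norm_le y z
  have e1 : (a / ‖y‖) • y - (b / ‖z‖) • z = (a / ‖y‖) • (y - z) + (a / ‖y‖ - b / ‖z‖) • z := by
    rw [smul_sub, sub_smul]; abel
  have e2 : ‖(a / ‖y‖ - b / ‖z‖) • z‖ ≤ (a / ‖y‖) * ‖y - z‖ + ‖y - z‖ := by
    rw [norm_smul, Real.norm_eq_abs]
    have : |a / ‖y‖ - b / ‖z‖| * ‖z‖ = |(a / ‖y‖) * (‖z‖ - ‖y‖) + (a - b)| := by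
      rw [← abs_of_pos hz0, ← abs_mul, abs_of_pos hz0]
      congr 1
      field_simp
      ring
    rw [this]
    refine (abs_add_le _ _).trans ?_
    rw [abs_mul, abs_of_nonneg ha0]
    have := mul_le_mul_of_nonneg_left hyz ha0
    linarith
  rw [e1]
  refine (norm_add_le _ _).trans ?_
  have e3 : ‖(a / ‖y‖) • (y - z)‖ = (a / ‖y‖) * ‖y - z‖ := by
    rw [norm_smul, Real.norm_of_nonneg ha0]
  have := mul_le_mul_of_nonneg_right ha1 (norm_nonneg (y - z))
  nlinarith

theorem brw_smooth {ι : Type} [Fintype ι]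
    (f : EuclideanSpace ℝ ι → EuclideanSpace ℝ ι) (hf : ContDiff ℝ 1 f) (C : ℝ) (hC : 0 < C)
    (hb : ∀ x, ‖f x‖ ≤ C) : ∃ x, f x = x := by
  by_contra hno
  push Not at hno
  let χ : ContDiffBump (0 : EuclideanSpace ℝ ι) := ⟨C, C + 1, hC, by linarith⟩
  have hχ1 : ∀ x, ‖x‖ ≤ C → χ x = 1 := fun x hx => χ.one_of_mem_closedBall (by simpa using hx)
  have hχ0 : ∀ x, C + 1 ≤ ‖x‖ → χ x = 0 := fun x hx => χ.zero_of_le_dist (by simpa using hx)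
  set g : EuclideanSpace ℝ ι → EuclideanSpace ℝ ι := fun x => χ x • f x with hg
  have hgb : ∀ x, ‖g x‖ ≤ C := by
    intro x
    simp only [hg]
    rw [norm_smul, Real.norm_of_nonneg χ.nonneg]
    have := χ.le_one (x := x)
    have h2 := hb x
    have h3 := χ.nonneg (x := x)
    nlinarith [norm_nonneg (f x)]
  set H : EuclideanSpace ℝ ι → EuclideanSpace ℝ ι := fun x => x - g x with hH
  have hgC : ContDiff ℝ 1 g := χ.contDiff.smul hf
  have hHC : ContDiff ℝ 1 H := contDiff_id.sub hgC
  have hgs : HasCompactSupport g := χ.hasCompactSupport.smul_right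
  obtain ⟨L, hL⟩ := hgC.lipschitzWith_of_hasCompactSupport hgs one_ne_zero
  have hH0 : ∀ x, H x ≠ 0 := by
    intro x hx
    have hxg : x = g x := sub_eq_zero.1 hx
    have hxC : ‖x‖ ≤ C := by
      have := hgb x
      rwa [← hxg] at this
    have : g x = f x := by simp [hg, hχ1 x hxC]
    exact hno x (by rw [← this, ← hxg])
  have hHout : ∀ x, C + 1 ≤ ‖x‖ → H x = x := by
    intro x hx; simp [hH, hg, hχ0 x hx]
  set R := 2 * C + 2 with hR
  have hR0 : 0 < R := by positivity
  have hHin : ∀ x, ‖x‖ < R → ‖H x‖ < R := by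
    intro x hx
    rcases le_or_gt (C + 1) ‖x‖ with h | h
    · rwa [hHout x h]
    · have := norm_sub_le x (g x)
      have h2 := hgb x
      simp only [hH]
      linarith
  obtain ⟨δ, hδ, hδH⟩ : ∃ δ > 0, ∀ x, δ ≤ ‖H x‖ := by
    have hcomp : IsCompact (Metric.closedBall (0 : EuclideanSpace ℝ ι) R) := isCompact_closedBall _ _
    obtain ⟨x0, hx0, hmin⟩ := hcomp.exists_isMinOn ⟨0, by simp [hR0.le]⟩
      (hHC.continuous.norm.continuousOn)
    refine ⟨min R ‖H x0‖, lt_min hR0 (norm_pos_iff.2 (hH0 x0)), fun x => ?_⟩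
    rcases le_or_gt ‖x‖ R with h | h
    · exact (min_le_right _ _).trans (hmin (by simpa using h))
    · rw [hHout x (by linarith)]
      exact (min_le_left _ _).trans h.le
  set K : EuclideanSpace ℝ ι → EuclideanSpace ℝ ι :=
    fun x => (max R ‖H x‖ / ‖H x‖) • H x with hK
  have hc0 : 0 ≤ 2 * (R / δ + 1) + 1 := by positivity
  have hKL : LipschitzWith (Real.toNNReal ((2 * (R / δ + 1) + 1) * (1 + L) + 1)) (fun x => K x - x) := by
    apply LipschitzWith.of_dist_le_mul
    intro x y
    rw [Real.coe_toNNReal _ (by positivity), dist_eq_norm, dist_eq_norm]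
    have h1 := brw_rho_lip R δ hR0 hδ (H x) (H y) (hδH x) (hδH y)
    have h2 : ‖H x - H y‖ ≤ (1 + L) * ‖x - y‖ := by
      have : H x - H y = (x - y) - (g x - g y) := by simp only [hH]; abel
      rw [this]
      have h3 := norm_sub_le (x - y) (g x - g y)
      have h4 := hL.norm_sub_le x y
      linarith
    have h5 : K x - x - (K y - y) = (K x - K y) - (x - y) := by abel
    rw [h5]
    have h6 := norm_sub_le (K x - K y) (x - y)
    have h7 := mul_le_mul_of_nonneg_left h2 hc0
    have h8 : ‖K x - K y‖ ≤ (2 * (R / δ + 1) + 1) * ‖H x - H y‖ := h1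
    nlinarith
  refine brw_no_retract K _ R hR0 hKL ?_ ?_ ?_
  · intro x hx
    have hx0 : ‖x‖ ≠ 0 := by linarith
    simp [hK, hHout x (by linarith), max_eq_right hx, div_self hx0]
  · intro x hx
    have h0 : 0 < ‖H x‖ := norm_pos_iff.2 (hH0 x)
    simp only [hK]
    rw [max_eq_left (hHin x hx).le, norm_smul, Real.norm_of_nonneg (by positivity),
      div_mul_cancel₀ _ h0.ne']
  · intro x hx
    have hHd : DifferentiableAt ℝ H x := hHC.differentiable one_ne_zero x
    have hnd : DifferentiableAt ℝ (fun x => ‖H x‖) x := hHd.norm ℝ (hH0 x)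
    have hrd : DifferentiableAt ℝ (fun x => R / ‖H x‖) x := by
      simp only [div_eq_mul_inv]
      exact (hnd.fun_inv (norm_ne_zero_iff.2 (hH0 x))).const_mul R
    have h1 : DifferentiableAt ℝ (fun x => (R / ‖H x‖) • H x) x := hrd.smul hHd
    refine h1.congr_of_eventuallyEq ?_
    have : Metric.ball (0 : EuclideanSpace ℝ ι) R ∈ nhds x :=
      Metric.isOpen_ball.mem_nhds (by simpa using hx)
    filter_upwards [this] with y hy
    simp only [hK]
    rw [max_eq_left (hHin y (by simpa using hy)).le]

theorem brw_bounded {ι : Type} [Fintype ι]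
    (f : EuclideanSpace ℝ ι → EuclideanSpace ℝ ι) (hf : Continuous f) (C : ℝ) (hC : 0 ≤ C)
    (hb : ∀ x, ‖f x‖ ≤ C) : ∃ x, f x = x := by
  have hstep : ∀ ε : ℝ, 0 < ε → ε ≤ 1 → ∃ x ∈ Metric.closedBall (0 : EuclideanSpace ℝ ι) (C + 1),
      ‖f x - x‖ ≤ ε := by
    intro ε hε hε1
    obtain ⟨g, hg, hgf, -⟩ := hf.exists_contDiff_approx 1 (continuous_const (y := ε)) (fun _ => hε)
    have hgb : ∀ x, ‖g x‖ ≤ C + 1 := by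
      intro x
      have h1 := hgf x
      rw [dist_eq_norm] at h1
      have h2 := norm_add_le (g x - f x) (f x)
      rw [sub_add_cancel] at h2
      linarith [hb x]
    obtain ⟨x, hx⟩ := brw_smooth g (by exact_mod_cast hg) (C + 1) (by linarith) hgb
    refine ⟨x, ?_, ?_⟩
    · have := hgb x
      rw [hx] at this
      simpa using this
    · have := hgf x
      rw [hx, dist_comm, dist_eq_norm] at this
      exact this.le
  have hcomp : IsCompact (Metric.closedBall (0 : EuclideanSpace ℝ ι) (C + 1)) := isCompact_closedBall _ _
  obtain ⟨x0, hx0, hmin⟩ := hcomp.exists_isMinOn ⟨0, by simp; linarith⟩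
      ((hf.sub continuous_id).norm.continuousOn)
  refine ⟨x0, ?_⟩
  by_contra hne
  have hpos : 0 < ‖f x0 - x0‖ := norm_pos_iff.2 (sub_ne_zero.2 hne)
  obtain ⟨x, hx, hx2⟩ := hstep (min 1 (‖f x0 - x0‖ / 2)) (by positivity) (min_le_left _ _)
  have h1 : ‖f x0 - x0‖ ≤ ‖f x - x‖ := hmin hx
  have h2 := min_le_right 1 (‖f x0 - x0‖ / 2)
  linarith

theorem brw_pi {ι : Type} [Fintype ι] (f : (ι → ℝ) → (ι → ℝ)) (hf : Continuous f)
    (hb : ∀ x i, |f x i| ≤ 1) : ∃ x, f x = x := by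
  let F : EuclideanSpace ℝ ι → EuclideanSpace ℝ ι := fun x => WithLp.toLp 2 (f (WithLp.ofLp x))
  have hF : Continuous F :=
    (PiLp.continuous_toLp 2 _).comp (hf.comp (PiLp.continuous_ofLp 2 _))
  obtain ⟨x, hx⟩ := brw_bounded F hF (Real.sqrt (Fintype.card ι)) (Real.sqrt_nonneg _) (by
    intro x
    rw [EuclideanSpace.norm_eq]
    apply Real.sqrt_le_sqrt
    calc ∑ i, ‖F x i‖ ^ 2 ≤ ∑ i : ι, (1:ℝ) := by
          apply Finset.sum_le_sum
          intro i _
          have : ‖F x i‖ ≤ 1 := hb _ i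
          have h0 := norm_nonneg (F x i)
          nlinarith
      _ = _ := by simp)
  refine ⟨WithLp.ofLp x, ?_⟩
  exact congrArg WithLp.ofLp hx

theorem brw_nash {J : Type} [Fintype J] {A : J → Type} [∀ j, Fintype (A j)]
    [∀ j, Nonempty (A j)] (F : ((Σ j, A j) → ℝ) → (Σ j, A j) → ℝ) (hF : Continuous F) :
    ∃ x : (Σ j, A j) → ℝ, (∀ p, 0 ≤ x p) ∧ (∀ j, ∑ a, x ⟨j, a⟩ = 1) ∧
      ∀ j a b, F x ⟨j, a⟩ < F x ⟨j, b⟩ → x ⟨j, a⟩ = 0 := by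
  have hFc : ∀ p, Continuous fun x => F x p := fun p => (continuous_apply p).comp hF
  -- retraction onto the product of simplices
  let S : ((Σ j, A j) → ℝ) → J → ℝ := fun x j => ∑ b, max (x ⟨j, b⟩) 0
  let r : ((Σ j, A j) → ℝ) → (Σ j, A j) → ℝ := fun x p =>
    (max (x p) 0 + max (1 - S x p.1) 0 / Fintype.card (A p.1)) / max 1 (S x p.1)
  have hm : ∀ x j, 0 < max 1 (S x j) := fun x j => lt_of_lt_of_le one_pos (le_max_left _ _)
  have hr0 : ∀ x p, 0 ≤ r x p := by
    intro x p
    have := hm x p.1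
    simp only [r]
    positivity
  have hr1 : ∀ x j, ∑ a, r x ⟨j, a⟩ = 1 := by
    intro x j
    have hcard : (Fintype.card (A j) : ℝ) ≠ 0 := by exact_mod_cast Fintype.card_ne_zero
    have hra : ∀ a, r x ⟨j, a⟩ = (max (x ⟨j, a⟩) 0 + max (1 - S x j) 0 / Fintype.card (A j)) /
        max 1 (S x j) := fun _ => rfl
    rw [Finset.sum_congr rfl fun a _ => hra a]
    rw [← Finset.sum_div, Finset.sum_add_distrib, div_eq_one_iff_eq (hm x j).ne']
    rw [Finset.sum_const, Finset.card_univ, nsmul_eq_mul, mul_div_cancel₀ _ hcard]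
    change S x j + max (1 - S x j) 0 = max 1 (S x j)
    rcases le_total 1 (S x j) with h | h
    · rw [max_eq_right h, max_eq_right (by linarith)]; ring
    · rw [max_eq_left h, max_eq_left (by linarith)]; ring
  have hrid : ∀ x, (∀ p, 0 ≤ x p) → (∀ j, ∑ a, x ⟨j, a⟩ = 1) → r x = x := by
    intro x h0 h1
    have hS : ∀ j, S x j = 1 := by
      intro j
      rw [← h1 j]
      exact Finset.sum_congr rfl fun b _ => max_eq_left (h0 _)
    funext p
    simp [r, hS, h0 p]
  have hSc : ∀ j, Continuous fun x => S x j := by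
    intro j
    simp only [S]
    fun_prop
  have hrc : Continuous r := by
    apply continuous_pi
    intro p
    have := hSc p.1
    simp only [r]
    refine Continuous.div (by fun_prop) (by fun_prop) fun x => (hm x _).ne'
  -- the Nash map
  let avg : ((Σ j, A j) → ℝ) → J → ℝ := fun y j => ∑ b, y ⟨j, b⟩ * F y ⟨j, b⟩
  let e : ((Σ j, A j) → ℝ) → (Σ j, A j) → ℝ := fun y p => max (F y p - avg y p.1) 0
  let N : ((Σ j, A j) → ℝ) → (Σ j, A j) → ℝ := fun y p =>
    (y p + e y p) / (1 + ∑ b, e y ⟨p.1, b⟩)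
  have he0 : ∀ y p, 0 ≤ e y p := fun y p => le_max_right _ _
  have hden : ∀ y j, 0 < 1 + ∑ b, e y ⟨j, b⟩ := by
    intro y j
    have : 0 ≤ ∑ b, e y ⟨j, b⟩ := Finset.sum_nonneg fun b _ => he0 _ _
    linarith
  have hec : ∀ p, Continuous fun y => e y p := by
    intro p
    simp only [e, avg]
    fun_prop
  have hNc : Continuous N := by
    apply continuous_pi
    intro p
    simp only [N]
    refine Continuous.div (by fun_prop) (by fun_prop) fun x => (hden x _).ne'
  have hN0 : ∀ y, (∀ p, 0 ≤ y p) → ∀ p, 0 ≤ N y p := by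
    intro y hy p
    exact div_nonneg (add_nonneg (hy p) (he0 y p)) (hden y p.1).le
  have hN1 : ∀ y, (∀ j, ∑ a, y ⟨j, a⟩ = 1) → ∀ j, ∑ a, N y ⟨j, a⟩ = 1 := by
    intro y hy j
    have hNa : ∀ a, N y ⟨j, a⟩ = (y ⟨j, a⟩ + e y ⟨j, a⟩) / (1 + ∑ b, e y ⟨j, b⟩) := fun _ => rfl
    rw [Finset.sum_congr rfl fun a _ => hNa a]
    rw [← Finset.sum_div, Finset.sum_add_distrib, hy j, div_self (hden y j).ne']
  obtain ⟨x, hx⟩ := brw_pi (fun x => N (r x)) (hNc.comp hrc) (by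
    intro x p
    have h0 := hN0 (r x) (hr0 x)
    rw [abs_of_nonneg (h0 p), ← hN1 (r x) (hr1 x) p.1]
    exact Finset.single_le_sum (f := fun a => N (r x) ⟨p.1, a⟩) (fun a _ => h0 _) (Finset.mem_univ p.2))
  have hx0 : ∀ p, 0 ≤ x p := by
    rw [← hx]; exact hN0 _ (hr0 x)
  have hx1 : ∀ j, ∑ a, x ⟨j, a⟩ = 1 := by
    have := hN1 _ (hr1 x)
    rw [hx] at this
    exact this
  have hNx : N x = x := by
    have := hx
    simp only [hrid x hx0 hx1] at this
    exact this
  refine ⟨x, hx0, hx1, ?_⟩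
  intro j
  -- some action in the support is no better than average
  have hex : ∃ a, 0 < x ⟨j, a⟩ ∧ F x ⟨j, a⟩ ≤ avg x j := by
    by_contra hcon
    push Not at hcon
    have h1 : ∑ a, x ⟨j, a⟩ * avg x j < ∑ a, x ⟨j, a⟩ * F x ⟨j, a⟩ := by
      apply Finset.sum_lt_sum
      · intro a _
        rcases (hx0 ⟨j, a⟩).eq_or_lt with h | h
        · simp [← h]
        · exact mul_le_mul_of_nonneg_left (hcon a h).le h.le
      · have : ∃ a ∈ Finset.univ, x ⟨j, a⟩ ≠ 0 := by
          apply Finset.exists_ne_zero_of_sum_ne_zero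
          rw [hx1 j]; exact one_ne_zero
        obtain ⟨a, _, ha⟩ := this
        have h : 0 < x ⟨j, a⟩ := lt_of_le_of_ne (hx0 _) (Ne.symm ha)
        exact ⟨a, Finset.mem_univ _, mul_lt_mul_of_pos_left (hcon a h) h⟩
    rw [← Finset.sum_mul, hx1 j, one_mul] at h1
    exact lt_irrefl _ h1
  obtain ⟨a0, ha0, hle⟩ := hex
  have hea0 : e x ⟨j, a0⟩ = 0 := max_eq_right (by simpa using hle)
  have hsum : ∑ b, e x ⟨j, b⟩ = 0 := by
    have h1 := congrFun hNx ⟨j, a0⟩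
    simp only [N, hea0, add_zero] at h1
    rw [div_eq_iff (hden x j).ne'] at h1
    nlinarith
  have hall : ∀ b, F x ⟨j, b⟩ ≤ avg x j := by
    intro b
    have h1 := (Finset.sum_eq_zero_iff_of_nonneg (fun b _ => he0 x ⟨j, b⟩)).1 hsum b (Finset.mem_univ _)
    have h2 : F x ⟨j, b⟩ - avg x j ≤ e x ⟨j, b⟩ := le_max_left _ _
    linarith
  intro a b hab
  by_contra hne
  have hpos : 0 < x ⟨j, a⟩ := lt_of_le_of_ne (hx0 _) (Ne.symm hne)
  have h1 : ∑ a, x ⟨j, a⟩ * F x ⟨j, a⟩ < ∑ a, x ⟨j, a⟩ * avg x j := by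
    apply Finset.sum_lt_sum
    · intro c _
      exact mul_le_mul_of_nonneg_left (hall c) (hx0 _)
    · exact ⟨a, Finset.mem_univ _, mul_lt_mul_of_pos_left (lt_of_lt_of_le hab (hall b)) hpos⟩
  rw [← Finset.sum_mul, hx1 j, one_mul] at h1
  exact lt_irrefl _ h1

end Brouwer

namespace EFG

/-- Perturbed version of `prodAlongNot`: every factor is increased by `ε`. -/
def wAlong (G : EFG) (ε : ℝ) (i : Fin G.n) (β : G.Profile) : List ℕ → List ℕ → ℝ
  | _, [] => 1
  | pre, b :: rest =>
    ((if G.P pre = some i then 1 else |G.moveProb β pre b|) + ε) * wAlong G ε i β (pre ++ [b]) rest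

/-- Perturbed version of `Yh`. -/
def wY (G : EFG) (ε : ℝ) (i : Fin G.n) (β : G.Profile) (h : List ℕ) : ℝ :=
  G.wAlong ε i β (h.take (G.sgDepthHist h)) (h.drop (G.sgDepthHist h))

/-- The beliefs derived from the perturbed weights. -/
def wMu (G : EFG) (ε : ℝ) (β : G.Profile) : G.Belief := fun i j h =>
  if h ∈ G.Info i j then G.wY ε i β h / ∑ h' ∈ G.Info i j, G.wY ε i β h' else 0

theorem continuous_moveProb (G : EFG) (h : List ℕ) (a : ℕ) :
    Continuous fun β : G.Profile => G.moveProb β h a := by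
  unfold moveProb
  cases G.P h with
  | none => exact continuous_const
  | some i => simp only [Option.elim]; fun_prop

theorem continuous_prodAlong (G : EFG) (rest : List ℕ) : ∀ pre : List ℕ,
    Continuous fun β : G.Profile => G.prodAlong β pre rest := by
  induction rest with
  | nil => intro pre; exact continuous_const
  | cons b rest ih =>
    intro pre
    exact (G.continuous_moveProb pre b).mul (ih _)

theorem continuous_nuAux (G : EFG) (i : Fin G.n) (j : ℕ) (rest : List ℕ) : ∀ pre : List ℕ,
    Continuous fun z : G.Profile × G.Belief => G.nuAux i j z.1 (z.2 i j) pre rest := by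
  induction rest with
  | nil => intro pre; exact continuous_const
  | cons b rest ih =>
    intro pre
    simp only [nuAux]
    split_ifs with hp
    · have := (G.continuous_prodAlong rest (pre ++ [b])).comp (continuous_fst (Y := G.Belief))
      exact Continuous.mul (by fun_prop) this
    · exact ih _

theorem continuous_uCond (G : EFG) (i : Fin G.n) (j a : ℕ) :
    Continuous fun z : G.Profile × G.Belief => G.uCond i j a z.1 z.2 := by
  unfold uCond nu
  exact continuous_finsetSum _ fun h _ => continuous_const.mul (G.continuous_nuAux i j h [])

theorem continuous_wAlong (G : EFG) (i : Fin G.n) (rest : List ℕ) : ∀ pre : List ℕ,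
    Continuous fun z : ℝ × G.Profile => G.wAlong z.1 i z.2 pre rest := by
  induction rest with
  | nil => intro pre; exact continuous_const
  | cons b rest ih =>
    intro pre
    have h1 := (G.continuous_moveProb pre b).comp (continuous_snd (X := ℝ))
    simp only [wAlong]
    refine Continuous.mul ?_ (ih _)
    split_ifs
    · fun_prop
    · exact (continuous_abs.comp h1).add continuous_fst

theorem continuous_wY (G : EFG) (i : Fin G.n) (h : List ℕ) :
    Continuous fun z : ℝ × G.Profile => G.wY z.1 i z.2 h :=
  G.continuous_wAlong i _ _

theorem wAlong_pos (G : EFG) {ε : ℝ} (hε : 0 < ε) (i : Fin G.n) (β : G.Profile) (rest : List ℕ) :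
    ∀ pre : List ℕ, 0 < G.wAlong ε i β pre rest := by
  induction rest with
  | nil => intro pre; exact one_pos
  | cons b rest ih =>
    intro pre
    have := ih (pre ++ [b])
    simp only [wAlong]
    split_ifs <;> positivity

theorem wAlong_zero (G : EFG) (i : Fin G.n) (β : G.Profile) (hβ : ∀ i j a, 0 ≤ β i j a)
    (rest : List ℕ) : ∀ pre : List ℕ, G.wAlong 0 i β pre rest = G.prodAlongNot i β pre rest := by
  induction rest with
  | nil => intro pre; rfl
  | cons b rest ih =>
    intro pre
    have hm : 0 ≤ G.moveProb β pre b := by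
      unfold moveProb
      cases G.P pre with
      | none => exact G.fc_nonneg _ _
      | some i => exact hβ _ _ _
    simp only [wAlong, prodAlongNot, ih, add_zero, abs_of_nonneg hm]

theorem wY_sum_pos (G : EFG) {ε : ℝ} (hε : 0 < ε) (i : Fin G.n) (β : G.Profile) (j : ℕ)
    (hne : (G.Info i j).Nonempty) : 0 < ∑ h ∈ G.Info i j, G.wY ε i β h :=
  Finset.sum_pos (fun h _ => G.wAlong_pos hε i β _ _) hne

theorem continuous_wMu (G : EFG) {ε : ℝ} (hε : 0 < ε) : Continuous fun β => G.wMu ε β := by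
  refine continuous_pi fun i => continuous_pi fun j => continuous_pi fun h => ?_
  simp only [wMu]
  split_ifs with hh
  · have hc : ∀ h, Continuous fun β : G.Profile => G.wY ε i β h := fun h =>
      (G.continuous_wY i h).comp (by fun_prop : Continuous fun β : G.Profile => (ε, β))
    exact (hc h).div (continuous_finsetSum _ fun h _ => hc h)
      fun β => (G.wY_sum_pos hε i β j ⟨h, hh⟩).ne'
  · exact continuous_const

theorem infoA_nonempty (G : EFG) (i : Fin G.n) (j : ℕ) (hj : j < G.m i) :
    (G.infoA i j).Nonempty := by
  obtain ⟨h, hh⟩ := G.info_nonempty i j hj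
  obtain ⟨_, _, ⟨a, ha⟩, _⟩ := (G.info_spec i j h hj).1 hh
  refine ⟨a, ?_⟩
  unfold infoA
  rw [Finset.mem_sup]
  exact ⟨h, hh, Finset.mem_filter.2 ⟨G.act_mem h a ha, ha⟩⟩

/-- Index type of (player, information set) pairs. -/
abbrev Jx (G : EFG) : Type := Σ i : Fin G.n, Fin (G.m i)

/-- Actions at an information set. -/
abbrev Ax (G : EFG) (p : G.Jx) : Type := {a : ℕ // a ∈ G.infoA p.1 p.2}

/-- The profile given by finitely many coordinates. -/
def toProfile (G : EFG) (x : (Σ p : G.Jx, G.Ax p) → ℝ) : G.Profile := fun i j a =>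
  if h : j < G.m i ∧ a ∈ G.infoA i j then x ⟨⟨i, ⟨j, h.1⟩⟩, ⟨a, h.2⟩⟩ else 0

theorem continuous_toProfile (G : EFG) : Continuous G.toProfile := by
  refine continuous_pi fun i => continuous_pi fun j => continuous_pi fun a => ?_
  unfold toProfile
  split_ifs with h
  · fun_prop
  · exact continuous_const

theorem perturbed_eq (G : EFG) {ε : ℝ} (hε : 0 < ε) : ∃ z : G.Profile × G.Belief,
    (∀ i j a, z.1 i j a ∈ Set.Icc (0:ℝ) 1) ∧ (∀ i j h, z.2 i j h ∈ Set.Icc (0:ℝ) 1) ∧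
    G.IsBehProfile z.1 ∧ G.IsBelief z.2 ∧
    (∀ i j, j < G.m i → ∀ h ∈ G.Info i j,
      (∑ h' ∈ G.Info i j, G.wY ε i z.1 h') * z.2 i j h = G.wY ε i z.1 h) ∧
    ∀ (i : Fin G.n) (j : ℕ), j < G.m i → ∀ a' ∈ G.infoA i j, ∀ a'' ∈ G.infoA i j,
      G.uCond i j a' z.1 z.2 < G.uCond i j a'' z.1 z.2 → z.1 i j a' = 0 := by
  have hne : ∀ p : G.Jx, Nonempty (G.Ax p) := fun p => by
    obtain ⟨a, ha⟩ := G.infoA_nonempty p.1 p.2 p.2.2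
    exact ⟨⟨a, ha⟩⟩
  obtain ⟨x, hx0, hx1, hopt⟩ := brw_nash (J := G.Jx) (A := G.Ax)
    (fun x p => G.uCond p.1.1 p.1.2 p.2 (G.toProfile x) (G.wMu ε (G.toProfile x))) (by
      refine continuous_pi fun p => ?_
      exact (G.continuous_uCond p.1.1 p.1.2 p.2).comp
        (G.continuous_toProfile.prodMk ((G.continuous_wMu hε).comp G.continuous_toProfile)))
  have hval : ∀ (i : Fin G.n) (j : ℕ) (hj : j < G.m i) (a : ℕ) (ha : a ∈ G.infoA i j),
      G.toProfile x i j a = x ⟨⟨i, ⟨j, hj⟩⟩, ⟨a, ha⟩⟩ := by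
    intro i j hj a ha
    simp [toProfile, hj, ha]
  have hxle : ∀ p, x p ≤ 1 := by
    rintro ⟨p, a⟩
    rw [← hx1 p]
    exact Finset.single_le_sum (f := fun a => x ⟨p, a⟩) (fun a _ => hx0 _) (Finset.mem_univ a)
  have hpos := fun i j (hn : (G.Info i j).Nonempty) => G.wY_sum_pos hε i (G.toProfile x) j hn
  have hwpos : ∀ i h, 0 < G.wY ε i (G.toProfile x) h := fun i h => G.wAlong_pos hε i _ _ _
  refine ⟨(G.toProfile x, G.wMu ε (G.toProfile x)), ?_, ?_, ?_, ?_, ?_, ?_⟩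
  · intro i j a
    by_cases h : j < G.m i ∧ a ∈ G.infoA i j
    · simp only [hval i j h.1 a h.2]
      exact ⟨hx0 _, hxle _⟩
    · simp [toProfile, h]
  · intro i j h
    simp only [wMu]
    split_ifs with hh
    · refine ⟨div_nonneg (hwpos i h).le (hpos i j ⟨h, hh⟩).le, ?_⟩
      rw [div_le_one (hpos i j ⟨h, hh⟩)]
      exact Finset.single_le_sum (fun h _ => (hwpos i h).le) hh
    · simp
  · intro i j hj
    refine ⟨fun a ha => ?_, ?_⟩
    · simp only [hval i j hj a ha]; exact hx0 _
    · rw [← Finset.sum_attach, ← hx1 ⟨i, ⟨j, hj⟩⟩]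
      rw [Finset.univ_eq_attach]
      exact Finset.sum_congr rfl fun a _ => hval i j hj a.1 a.2
  · intro i j hj
    have hn := G.info_nonempty i j hj
    refine ⟨fun h hh => ?_, ?_⟩
    · simp only [wMu, hh, if_true]
      exact div_nonneg (hwpos i h).le (hpos i j hn).le
    · have hmu : ∀ h ∈ G.Info i j, G.wMu ε (G.toProfile x) i j h =
          G.wY ε i (G.toProfile x) h / ∑ h' ∈ G.Info i j, G.wY ε i (G.toProfile x) h' := by
        intro h hh
        simp only [wMu, hh, if_true]
      rw [Finset.sum_congr rfl hmu]
      rw [← Finset.sum_div, div_self (hpos i j hn).ne']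
  · intro i j hj h hh
    simp only [wMu, hh, if_true]
    rw [mul_div_cancel₀ _ (hpos i j ⟨h, hh⟩).ne']
  · intro i j hj a' ha' a'' ha'' hlt
    simp only [hval i j hj a' ha']
    exact hopt ⟨i, ⟨j, hj⟩⟩ ⟨a', ha'⟩ ⟨a'', ha''⟩ hlt

end EFG

/-- Every finite extensive-form game with perfect recall possesses a subgame perfect
semi-sequential equilibrium. -/
theorem stmt14 (G : EFG) (hPR : G.PerfectRecall) :
    ∃ (β : G.Profile) (μ : G.Belief), G.SubgameSemiSeqEq β μ := by
  have hεp : ∀ k : ℕ, (0:ℝ) < 1 / ((k : ℝ) + 1) := fun k => by positivity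
  choose z hz1 hz2 hz3 hz4 hz5 hz6 using fun k : ℕ => G.perturbed_eq (hεp k)
  have hcomp : IsCompact
      (({β : G.Profile | ∀ i j a, β i j a ∈ Set.Icc (0:ℝ) 1}) ×ˢ
        ({μ : G.Belief | ∀ i j h, μ i j h ∈ Set.Icc (0:ℝ) 1})) := by
    apply IsCompact.prod
    · exact isCompact_pi_infinite fun i => isCompact_pi_infinite fun j =>
        isCompact_pi_infinite fun a => isCompact_Icc
    · exact isCompact_pi_infinite fun i => isCompact_pi_infinite fun j =>
        isCompact_pi_infinite fun a => isCompact_Icc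
  obtain ⟨zs, hzs, hlim⟩ := hcomp.ultrafilter_le_nhds ((Filter.hyperfilter ℕ).map z) (by
    rw [Filter.le_principal_iff]
    exact Filter.mem_map.2 (Filter.univ_mem' fun k => ⟨hz1 k, hz2 k⟩))
  have hT : Filter.Tendsto z (Filter.hyperfilter ℕ : Filter ℕ) (nhds zs) := hlim
  have hT1 : Filter.Tendsto (fun k => (z k).1) (Filter.hyperfilter ℕ : Filter ℕ) (nhds zs.1) :=
    (continuous_fst.tendsto zs).comp hT
  have hT2 : Filter.Tendsto (fun k => (z k).2) (Filter.hyperfilter ℕ : Filter ℕ) (nhds zs.2) :=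
    (continuous_snd.tendsto zs).comp hT
  have hβ : ∀ i j a, Filter.Tendsto (fun k => (z k).1 i j a) (Filter.hyperfilter ℕ : Filter ℕ)
      (nhds (zs.1 i j a)) := fun i j a =>
    ((by fun_prop : Continuous fun β : G.Profile => β i j a).tendsto zs.1).comp hT1
  have hμ : ∀ i j h, Filter.Tendsto (fun k => (z k).2 i j h) (Filter.hyperfilter ℕ : Filter ℕ)
      (nhds (zs.2 i j h)) := fun i j a =>
    ((by fun_prop : Continuous fun β : G.Belief => β i j a).tendsto zs.2).comp hT2
  have hε : Filter.Tendsto (fun k : ℕ => 1 / ((k : ℝ) + 1)) (Filter.hyperfilter ℕ : Filter ℕ)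
      (nhds 0) := by
    refine tendsto_one_div_add_atTop_nhds_zero_nat.mono_left ?_
    rw [← Nat.cofinite_eq_atTop]
    exact Filter.hyperfilter_le_cofinite
  have hw : ∀ i h, Filter.Tendsto (fun k : ℕ => G.wY (1 / ((k : ℝ) + 1)) i (z k).1 h)
      (Filter.hyperfilter ℕ : Filter ℕ) (nhds (G.Yh i zs.1 h)) := by
    intro i h
    have h0 : G.Yh i zs.1 h = G.wY 0 i zs.1 h :=
      (G.wAlong_zero i zs.1 (fun i j a => (hzs.1 i j a).1) _ _).symm
    rw [h0]
    exact ((G.continuous_wY i h).tendsto (0, zs.1)).comp (hε.prodMk_nhds hT1)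
  refine ⟨zs.1, zs.2, ?_, ?_, ?_, ?_⟩
  · intro i j hj
    refine ⟨fun a _ => (hzs.1 i j a).1, ?_⟩
    refine tendsto_nhds_unique (tendsto_finsetSum _ fun a _ => hβ i j a) ?_
    refine tendsto_const_nhds.congr fun k => ?_
    exact ((hz3 k i j hj).2).symm
  · intro i j hj
    refine ⟨fun h _ => (hzs.2 i j h).1, ?_⟩
    refine tendsto_nhds_unique (tendsto_finsetSum _ fun a _ => hμ i j a) ?_
    refine tendsto_const_nhds.congr fun k => ?_
    exact ((hz4 k i j hj).2).symm
  · intro i j hj h hh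
    refine tendsto_nhds_unique
      ((tendsto_finsetSum (G.Info i j) fun h' _ => hw i h').mul (hμ i j h)) ?_
    refine (hw i h).congr fun k => ?_
    exact (hz5 k i j hj h hh).symm
  · intro i j hj a' ha' a'' ha'' hlt
    have t1 := ((G.continuous_uCond i j a').tendsto zs).comp hT
    have t2 := ((G.continuous_uCond i j a'').tendsto zs).comp hT
    have hev := t1.eventually_lt t2 hlt
    refine tendsto_nhds_unique (hβ i j a') ?_
    refine tendsto_const_nhds.congr' ?_
    filter_upwards [hev] with k hk
    exact (hz6 k i j hj a' ha' a'' ha'' hk).symm
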